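/- arXiv:2011.05792 — 4 statements merged into one kernel-verified Lean document; each statement's English description precedes it below -/
import Mathlib

section
/- Let φ : X → Y be a continuous, open and closed surjection of topological spaces with X Hausdorff, and let m ≥ 1 be a natural number such that for every y ∈ Y the fiber φ⁻¹(y) has exactly m elements. Then φ is a covering map. -/
/-- An open and closed continuous surjection from a Hausdorff space all of whose fibers have
exactly `m ≥ 1` elements is a covering map. -/
theorem isCoveringMap_of_open_closed_constant_fiber
    {X Y : Type*} [TopologicalSpace X] [TopologicalSpace Y] [T2Space X]
    (φ : X → Y) (hcont : Continuous φ) (hopen : IsOpenMap φ) (hclosed : IsClosedMap φ)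
    (hsurj : Function.Surjective φ) (m : ℕ) (hm : 1 ≤ m)
    (hfib : ∀ y : Y, (φ ⁻¹' {y}).encard = m) :
    IsCoveringMap φ := by
  have hfin : ∀ y, (φ ⁻¹' {y}).Finite := fun y =>
    Set.finite_of_encard_eq_coe (hfib y)
  rw [isCoveringMap_iff_isCoveringMapOn_univ]
  refine hclosed.isCoveringMapOn_of_isLocalHomeomorphOn (fun y _ => hfin y) ?_
  rw [Set.preimage_univ, ← isLocalHomeomorph_iff_isLocalHomeomorphOn_univ,
    isLocalHomeomorph_iff_isOpenEmbedding_restrict]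
  intro x
  obtain ⟨V, hV, disj⟩ := (hfin (φ x)).t2_separation
  let W : Set X := V x ∩ φ ⁻¹' (⋂ e ∈ φ ⁻¹' {φ x}, φ '' V e)
  have hW : IsOpen W := (hV x).2.inter
    (((hfin (φ x)).isOpen_biInter fun e _ => hopen _ (hV e).2).preimage hcont)
  have hxW : x ∈ W := by
    refine ⟨(hV x).1, ?_⟩
    simp only [Set.mem_preimage, Set.mem_iInter]
    intro e he
    exact ⟨e, (hV e).1, he⟩
  refine ⟨W, hW.mem_nhds hxW, .of_continuous_injective_isOpenMap
    (hcont.comp continuous_subtype_val) ?_ (hopen.comp hW.isOpenMap_subtype_val)⟩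
  rintro ⟨a, ha⟩ ⟨b, hb⟩ hab
  change φ a = φ b at hab
  have h1 : ∀ e ∈ φ ⁻¹' {φ x}, ∃ c ∈ V e, φ c = φ a := by
    have := ha.2
    simp only [Set.mem_preimage, Set.mem_iInter] at this
    exact this
  choose! g hg hga using h1
  have ginj : Set.InjOn g (φ ⁻¹' {φ x}) := by
    intro e he e' he' h
    by_contra hne
    exact Set.disjoint_left.1 (disj he he' hne) (hg e he) (h ▸ hg e' he')
  have himg : g '' (φ ⁻¹' {φ x}) = φ ⁻¹' {φ a} := by
    apply ((hfin _).image g).eq_of_subset_of_encard_le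
    · rintro _ ⟨e, he, rfl⟩
      exact hga e he
    · rw [ginj.encard_image, hfib, hfib]
  have key : ∀ c ∈ V x, φ c = φ a → c = g x := by
    intro c hc hca
    have : c ∈ g '' (φ ⁻¹' {φ x}) := by rw [himg]; exact hca
    obtain ⟨e, he, rfl⟩ := this
    by_contra hne
    have hex : e ≠ x := fun h => hne (by rw [h])
    exact Set.disjoint_left.1 (disj he rfl hex) (hg e he) hc
  exact Subtype.ext ((key a ha.1 rfl).trans (key b hb.1 hab.symm).symm)
end

section
/- Let φ : X → Y be a continuous, open and closed surjection of topological spaces with X Hausdorff, let m ≥ 1 be a natural number, and let X₁ ⊆ X be a closed subset such that φ⁻¹(φ(X₁)) = X₁ and such that for every x ∈ X ∖ X₁ the fiber φ⁻¹(φ(x)) has exactly m elements. Then the restriction of φ to X ∖ X₁, viewed as a map onto Y ∖ φ(X₁), is a covering map all of whose fibers have exactly m elements. -/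
theorem aux_isCoveringMap {E B : Type*} [TopologicalSpace E] [TopologicalSpace B] [T2Space E]
    (f : E → B) (hcont : Continuous f) (hopen : IsOpenMap f) (hclosed : IsClosedMap f) (m : ℕ)
    (hfib : ∀ y, (f ⁻¹' {y}).encard = m) : IsCoveringMap f := by
  have hfin : ∀ y, (f ⁻¹' {y}).Finite := fun y => Set.finite_of_encard_eq_coe (hfib y)
  have hloc : IsLocalHomeomorph f := by
    rw [isLocalHomeomorph_iff_isOpenEmbedding_restrict]
    intro e
    obtain ⟨U, hU, hdisj⟩ := (hfin (f e)).t2_separation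
    have hV : IsOpen (⋂ x ∈ f ⁻¹' {f e}, f '' U x) :=
      (hfin (f e)).isOpen_biInter fun x _ => hopen _ (hU x).2
    have hN : IsOpen (U e ∩ f ⁻¹' (⋂ x ∈ f ⁻¹' {f e}, f '' U x)) :=
      (hU e).2.inter (hV.preimage hcont)
    refine ⟨_, hN.mem_nhds ⟨(hU e).1, ?_⟩, ?_⟩
    · simp only [Set.mem_preimage, Set.mem_iInter]
      intro x hx
      exact ⟨x, (hU x).1, hx⟩
    · refine .of_continuous_injective_isOpenMap (hcont.comp continuous_subtype_val) ?_
        (hopen.comp hN.isOpenMap_subtype_val)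
      rintro ⟨a, ha, haV⟩ ⟨b, hb, hbV⟩ hab
      have hab : f a = f b := hab
      have hg : ∀ x : E, ∃ z, x ∈ f ⁻¹' {f e} → z ∈ U x ∧ f z = f a := by
        intro x
        by_cases hx : x ∈ f ⁻¹' {f e}
        · obtain ⟨z, hz⟩ := Set.mem_iInter₂.1 haV x hx
          exact ⟨z, fun _ => hz⟩
        · exact ⟨x, fun h => absurd h hx⟩
      choose g hg using hg
      have hdis : ∀ x ∈ f ⁻¹' {f e}, ∀ y ∈ f ⁻¹' {f e}, ∀ z, z ∈ U x → z ∈ U y → x = y := by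
        intro x hx y hy z hzx hzy
        by_contra hne
        exact Set.disjoint_left.1 (hdisj hx hy hne) hzx hzy
      have hinj : Set.InjOn g (f ⁻¹' {f e}) := fun x hx y hy hxy =>
        hdis x hx y hy (g x) (hg x hx).1 (hxy ▸ (hg y hy).1)
      have himg : g '' (f ⁻¹' {f e}) = f ⁻¹' {f a} := by
        refine ((hfin (f e)).image g).eq_of_subset_of_encard_le ?_ ?_
        · rintro _ ⟨x, hx, rfl⟩
          exact (hg x hx).2
        · rw [hinj.encard_image, hfib, hfib]
      have key : ∀ c, c ∈ U e → f c = f a → c = g e := by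
        intro c hc hca
        have : c ∈ g '' (f ⁻¹' {f e}) := by rw [himg]; exact hca
        obtain ⟨x, hx, rfl⟩ := this
        rw [hdis x hx e rfl (g x) (hg x hx).1 hc]
      exact Subtype.ext ((key a ha rfl).trans (key b hb hab.symm).symm)
  intro y
  exact hclosed.isCoveringMapOn_of_isLocalHomeomorphOn (s := Set.univ) (fun x _ => hfin x)
    (hloc.isLocalHomeomorphOn.mono (Set.subset_univ _)) y trivial

/-- Let `φ : X → Y` be a continuous, open and closed surjection with `X` Hausdorff, and let
`X₁ ⊆ X` be a closed subset saturated for `φ` (i.e. `φ⁻¹(φ(X₁)) = X₁`) such that every fiber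
over the complement of `φ(X₁)` has exactly `m ≥ 1` elements.  Then the restriction of `φ`
to `X ∖ X₁`, viewed as a map onto `Y ∖ φ(X₁)`, is a covering map all of whose fibers have
exactly `m` elements. -/
theorem restriction_isCoveringMap_off_branch_locus
    {X Y : Type*} [TopologicalSpace X] [TopologicalSpace Y] [T2Space X]
    (φ : X → Y) (hcont : Continuous φ) (hopen : IsOpenMap φ) (hclosed : IsClosedMap φ)
    (hsurj : Function.Surjective φ) (m : ℕ) (hm : 1 ≤ m)
    (X₁ : Set X) (hX₁ : IsClosed X₁) (hsat : φ ⁻¹' (φ '' X₁) = X₁)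
    (hfib : ∀ x ∉ X₁, (φ ⁻¹' {φ x}).encard = m) :
    ∃ ψ : (X₁ᶜ : Set X) → ((φ '' X₁)ᶜ : Set Y),
      (∀ x : (X₁ᶜ : Set X), (ψ x : Y) = φ (x : X)) ∧
      IsCoveringMap ψ ∧
      ∀ y : ((φ '' X₁)ᶜ : Set Y), (ψ ⁻¹' {y}).encard = m := by
  have hT : X₁ᶜ = φ ⁻¹' (φ '' X₁)ᶜ := by rw [Set.preimage_compl, hsat]
  have hF : ∀ y : ((φ '' X₁)ᶜ : Set Y),
      (((φ '' X₁)ᶜ).restrictPreimage φ ⁻¹' {y}).encard = m := by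
    rintro ⟨y, hy⟩
    obtain ⟨x, rfl⟩ := hsurj y
    rw [← hfib x (fun hx => hy ⟨x, hx, rfl⟩), ← Subtype.val_injective.encard_image]
    congr 1
    ext z
    constructor
    · rintro ⟨w, hw, rfl⟩
      exact congrArg Subtype.val hw
    · intro hz
      have hz : φ z = φ x := hz
      exact ⟨⟨z, by rw [Set.mem_preimage, hz]; exact hy⟩, Subtype.ext hz, rfl⟩
  rw [hT]
  exact ⟨((φ '' X₁)ᶜ).restrictPreimage φ, fun _ => rfl,
    aux_isCoveringMap _ hcont.restrictPreimage (hopen.restrictPreimage _)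
      (hclosed.restrictPreimage _) m hF, hF⟩
end

section
/- Let φ : X → Y be a continuous, open and closed surjection of topological spaces with X Hausdorff, let m ≥ 1 be a natural number, and let X₁ ⊆ X be a closed subset such that: (i) φ⁻¹(φ(X₁)) = X₁; (ii) for every x ∈ X ∖ X₁ the fiber φ⁻¹(φ(x)) has exactly m elements; and (iii) Y ∖ φ(X₁) is dense in Y. Then for every y ∈ Y the fiber φ⁻¹(y) has at most m elements. -/
/-- Let `φ : X → Y` be a continuous, open and closed surjection with `X` Hausdorff, and let
`X₁ ⊆ X` be a closed subset saturated for `φ` (i.e. `φ⁻¹(φ(X₁)) = X₁`) such that every fiber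
over the complement of `φ(X₁)` has exactly `m ≥ 1` elements, and such that `Y ∖ φ(X₁)` is
dense in `Y`.  Then every fiber of `φ` has at most `m` elements. -/
theorem fiber_card_le_of_dense_regular_values
    {X Y : Type*} [TopologicalSpace X] [TopologicalSpace Y] [T2Space X]
    (φ : X → Y) (hcont : Continuous φ) (hopen : IsOpenMap φ) (hclosed : IsClosedMap φ)
    (hsurj : Function.Surjective φ) (m : ℕ) (hm : 1 ≤ m)
    (X₁ : Set X) (hX₁ : IsClosed X₁) (hsat : φ ⁻¹' (φ '' X₁) = X₁)
    (hfib : ∀ x ∉ X₁, (φ ⁻¹' {φ x}).encard = m)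
    (hdense : Dense ((φ '' X₁)ᶜ : Set Y)) :
    ∀ y : Y, (φ ⁻¹' {y}).encard ≤ m := by
  intro y
  by_contra hlt
  rw [not_le] at hlt
  obtain ⟨t, hts, htc⟩ := Set.exists_subset_encard_eq (Order.add_one_le_of_lt hlt)
  have htfin : t.Finite := Set.finite_of_encard_eq_coe (k := m + 1) (by rw [htc]; simp)
  obtain ⟨U, hU, hdisj⟩ := htfin.t2_separation
  have hV : IsOpen (⋂ x ∈ t, φ '' U x) :=
    htfin.isOpen_biInter fun x _ => hopen _ (hU x).2
  have hy : y ∈ ⋂ x ∈ t, φ '' U x :=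
    Set.mem_iInter₂.2 fun x hx => ⟨x, (hU x).1, hts hx⟩
  obtain ⟨z, hzV, hz⟩ := hdense.inter_open_nonempty _ hV ⟨y, hy⟩
  obtain ⟨w, rfl⟩ := hsurj z
  have hw : w ∉ X₁ := fun h => hz ⟨w, h, rfl⟩
  have hg : ∀ x, ∃ u, x ∈ t → u ∈ U x ∧ φ u = φ w := by
    intro x
    by_cases hx : x ∈ t
    · obtain ⟨u, hu, he⟩ := Set.mem_iInter₂.1 hzV x hx
      exact ⟨u, fun _ => ⟨hu, he⟩⟩
    · exact ⟨x, fun h => absurd h hx⟩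
  choose g hg using hg
  have hinj : Set.InjOn g t := by
    intro a ha b hb hab
    by_contra hne
    exact Set.disjoint_left.1 (hdisj ha hb hne) (hg a ha).1 (hab ▸ (hg b hb).1)
  have hle : (g '' t).encard ≤ (φ ⁻¹' {φ w}).encard := by
    apply Set.encard_le_encard
    rintro _ ⟨x, hx, rfl⟩
    exact (hg x hx).2
  rw [hinj.encard_image, htc, hfib w hw] at hle
  have : m + 1 ≤ m := by exact_mod_cast hle
  omega
end

section
/- Let g ≥ 2 be a natural number and x₀ ∈ ℝ. For each i ∈ {1, …, 2g−2}, let f_i, g_i : ℝ → ℝ be orientation-preserving homeomorphisms (continuous strictly increasing bijections of ℝ) satisfying f_i(x+1) = f_i(x) + 1 and g_i(x+1) = g_i(x) + 1 for all x ∈ ℝ, and with f_i(x₀) − x₀ ∈ [0,1) and g_i(x₀) − x₀ ∈ [0,1). Then the integer (Σ_{i=1}^{2g−2} ⌊g_i(f_i(x₀)) − x₀⌋) − (g − 1) lies in the interval [−(g−1), g−1], i.e. it belongs to {−g+1, …, g−1}. -/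
open scoped BigOperators

/-- Let `g ≥ 2` and for `1 ≤ i ≤ 2g−2` let `Fᵢ, Gᵢ : ℝ → ℝ` be orientation-preserving
homeomorphisms of the line commuting with the unit translation (lifts of circle
homeomorphisms), normalized at a basepoint `x₀` so that `Fᵢ(x₀) − x₀ ∈ [0,1)` and
`Gᵢ(x₀) − x₀ ∈ [0,1)`.  Then the integer `(Σᵢ ⌊Gᵢ(Fᵢ(x₀)) − x₀⌋) − (g − 1)` lies in
`{−g+1, …, g−1}`. -/
theorem cocycle_value_bound
    (g : ℕ) (hg : 2 ≤ g) (x₀ : ℝ) (F G : Fin (2 * g - 2) → ℝ → ℝ)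
    (hFc : ∀ i, Continuous (F i)) (hFm : ∀ i, StrictMono (F i))
    (hFb : ∀ i, Function.Bijective (F i))
    (hGc : ∀ i, Continuous (G i)) (hGm : ∀ i, StrictMono (G i))
    (hGb : ∀ i, Function.Bijective (G i))
    (hF1 : ∀ i, ∀ x : ℝ, F i (x + 1) = F i x + 1)
    (hG1 : ∀ i, ∀ x : ℝ, G i (x + 1) = G i x + 1)
    (hF0 : ∀ i, F i x₀ - x₀ ∈ Set.Ico (0 : ℝ) 1)
    (hG0 : ∀ i, G i x₀ - x₀ ∈ Set.Ico (0 : ℝ) 1) :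
    (∑ i, ⌊G i (F i x₀) - x₀⌋) - ((g : ℤ) - 1) ∈
      Set.Icc (-((g : ℤ) - 1)) ((g : ℤ) - 1) := by
  have h0 : ∀ i, 0 ≤ ⌊G i (F i x₀) - x₀⌋ := by
    intro i
    have h1 := (hF0 i).1
    have h2 := (hG0 i).1
    have h3 : G i x₀ ≤ G i (F i x₀) := (hGm i).monotone (by linarith)
    exact Int.floor_nonneg.mpr (by linarith)
  have h1 : ∀ i, ⌊G i (F i x₀) - x₀⌋ ≤ 1 := by
    intro i
    have h1 := (hF0 i).2
    have h2 := (hG0 i).2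
    have h3 : G i (F i x₀) ≤ G i (x₀ + 1) := (hGm i).monotone (by linarith)
    rw [hG1] at h3
    have h4 : ⌊G i (F i x₀) - x₀⌋ < 2 := Int.floor_lt.mpr (by push_cast; linarith)
    omega
  have hs0 : 0 ≤ ∑ i, ⌊G i (F i x₀) - x₀⌋ := Finset.sum_nonneg fun i _ => h0 i
  have hs1 : ∑ i, ⌊G i (F i x₀) - x₀⌋ ≤ ∑ _i : Fin (2 * g - 2), (1 : ℤ) :=
    Finset.sum_le_sum fun i _ => h1 i
  simp only [Finset.sum_const, Finset.card_univ, Fintype.card_fin, nsmul_eq_mul, mul_one] at hs1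
  rw [Set.mem_Icc]
  constructor <;> omega
end
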